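/- Let p₀, q₀ ≥ 3 be integers with (p₀ − 2)(q₀ − 2) = 4 (i.e. (p₀,q₀) ∈ {(3,6),(4,4),(6,3)}). Consider natural numbers V, E, F, L, f, and finitely supported families (f_{•,k})_{k≥1}, (f′_{•,k})_{k≥1} of natural numbers, with f_• = Σ_k f_{•,k} and f′_• = Σ_k f′_{•,k}, satisfying: F = f + f_• + f′_•; 2E = p₀·V + L; 2E = q₀·f + Σ_k k·f_{•,k} + Σ_k (q₀ + k)·f′_{•,k}; Σ_k k·(f_{•,k} + f′_{•,k}) = L; and the Euler relation F − E + V = 1 (in ℤ). Then 2·f_• = L + 2; in particular L is even and f_• = L/2 + 1. -/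

import Mathlib

/-!
The `L` corners at the marked vertex account for the whole length of the faces in `f_•` and for the
excess length of those in `f'_•`. Discarding them leaves the incidences of a regular tessellation,
`p₀ V = q₀ (f + f'_•) = 2E - L`. Flatness, in the form `p₀ q₀ = 2 (p₀ + q₀)`, turns this into
`2 (V + f + f'_•) = 2E - L`, so in the Euler relation everything but `f_•` and `L` cancels.
-/

theorem mul_eq_two_mul_add_of_sub_two_mul_sub_two {p q : ℕ} (h : (p - 2) * (q - 2) = 4) :
    p * q = 2 * (p + q) := by
  have hp : p - 2 ≠ 0 := left_ne_zero_of_mul (h ▸ four_ne_zero)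
  have hq : q - 2 ≠ 0 := right_ne_zero_of_mul (h ▸ four_ne_zero)
  obtain ⟨a, rfl⟩ : ∃ a, p = a + 2 := ⟨p - 2, by omega⟩
  obtain ⟨b, rfl⟩ : ∃ b, q = b + 2 := ⟨q - 2, by omega⟩
  simp only [Nat.add_sub_cancel] at h
  linarith

theorem mul_add_eq_mul_of_mul_eq_mul_add {R : Type*} [CommSemiring R] [IsLeftCancelMulZero R]
    {p q c v w : R} (hpq : p * q = c * (p + q)) (hne : p + q ≠ 0) (hvw : p * v = q * w) :
    c * (v + w) = p * v := by
  refine mul_left_cancel₀ hne ?_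
  calc (p + q) * (c * (v + w)) = c * (p + q) * (v + w) := by ring
    _ = p * q * (v + w) := by rw [hpq]
    _ = p * (q * w) + q * (p * v) := by ring
    _ = (p + q) * (p * v) := by rw [← hvw, add_mul]

theorem finsupp_sum_add_mul {ι R : Type*} [NonUnitalNonAssocSemiring R]
    (g : ι →₀ R) (c : R) (w : ι → R) :
    (g.sum fun i m => (c + w i) * m) = c * (g.sum fun _ m => m) + g.sum fun i m => w i * m := by
  simp only [add_mul, Finsupp.sum_add, Finsupp.mul_sum]

/-- The marked vertex is not counted in `V`, so `χ` is the Euler characteristic of the surface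
minus one; on an orientable surface of genus `g`, `χ = 1 - 2g`. -/
theorem stmt_17_general {p₀ q₀ V E F L f : ℕ} {fb f'b : ℕ →₀ ℕ} {χ : ℤ}
    (hpq : (p₀ - 2) * (q₀ - 2) = 4)
    (hF : F = f + (fb.sum fun _ m => m) + f'b.sum fun _ m => m)
    (hvertex : 2 * E = p₀ * V + L)
    (hface : 2 * E = q₀ * f + (fb.sum fun k m => k * m) + f'b.sum fun k m => (q₀ + k) * m)
    (hmarked : (fb.sum fun k m => k * m) + (f'b.sum fun k m => k * m) = L)
    (heuler : (F : ℤ) - E + V = χ) :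
    2 * ((fb.sum fun _ m => m : ℕ) : ℤ) = L + 2 * χ := by
  have hregular : p₀ * V = q₀ * (f + f'b.sum fun _ m => m) := by
    rw [finsupp_sum_add_mul f'b q₀ fun k => k] at hface
    linarith
  have hne : p₀ + q₀ ≠ 0 := by
    intro hzero
    obtain ⟨rfl, rfl⟩ := Nat.add_eq_zero_iff.mp hzero
    contradiction
  have hflat : 2 * (V + (f + f'b.sum fun _ m => m)) = p₀ * V :=
    mul_add_eq_mul_of_mul_eq_mul_add (mul_eq_two_mul_add_of_sub_two_mul_sub_two hpq) hne hregular
  omega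

/-- Combinatorial core of the no-go theorem for the macroscopic loop operator `tr X^L`
in the dually weighted matrix model of flat JT gravity: for a planar graph built on a
regular flat tessellation pair `(p₀,q₀)` with `(p₀−2)(q₀−2) = 4`, the counting relations
and Euler's identity force `2 f_• = L + 2`, i.e. `L` is even and `f_• = L/2 + 1`. -/
theorem stmt_17 (p₀ q₀ : ℕ) (hp : 3 ≤ p₀) (hq : 3 ≤ q₀)
    (hpq : (p₀ - 2) * (q₀ - 2) = 4)
    (V E F L f : ℕ) (fb f'b : ℕ →₀ ℕ)
    (hfb0 : fb 0 = 0) (hf'b0 : f'b 0 = 0)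
    (fdot f'dot : ℕ)
    (hfdot : fdot = fb.sum fun _ m => m)
    (hf'dot : f'dot = f'b.sum fun _ m => m)
    (h1 : F = f + fdot + f'dot)
    (h2 : 2 * E = p₀ * V + L)
    (h3 : 2 * E = q₀ * f + (fb.sum fun k m => k * m) + f'b.sum fun k m => (q₀ + k) * m)
    (h4 : (fb.sum fun k m => k * m) + (f'b.sum fun k m => k * m) = L)
    (h5 : (F : ℤ) - E + V = 1) :
    2 * fdot = L + 2 := by
  subst hfdot hf'dot
  have hgeneral := stmt_17_general hpq h1 h2 h3 h4 h5
  omega
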